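/- Every AE f ∈ 𝒜(+) can be expressed uniquely, up to the order of the summands, as a sum f = f₁ + ⋯ + f_n with n ≥ 2, where the sets 𝒱(f₁), …, 𝒱(f_n) are pairwise disjoint with union 𝒱(f) and each fⱼ ∈ 𝒜(×, ÷). Moreover: (i) f is of the first type if and only if every fⱼ is of the first type; (ii) f is of the third type if and only if every fⱼ is of the second or third type and the fⱼ's of the second type can be partitioned into pairs {f_{j′}, f_{j″}} with f_{j′} ≅ −f_{j″}. -/

import Mathlib

/- Common framework: `K = ℝ(x₁,x₂,…)` is the field of rational functions over `ℝ` in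
countably many variables (the fraction field of `MvPolynomial ℕ ℝ`), arithmetic
expressions, the permutation action, isomorphism, types, the `EndsWith` classification,
multilinear forms and monicity, isomorphism classes and their counting. -/

open MvPolynomial

noncomputable section

abbrev P : Type := MvPolynomial ℕ ℝ
abbrev K : Type := FractionRing P

def toK : P →+* K := algebraMap P K

/-- The variable `xᵢ`, as an element of `K`. -/
def Xv (i : ℕ) : K := toK (X i)

/-- `Vars f` : the set of variables on which `f` depends, i.e. the variables occurring in a
representation of `f` as a quotient of two coprime polynomials. -/
def Vars (f : K) : Set ℕ :=
  {i | ∃ p q : P, q ≠ 0 ∧ IsRelPrime p q ∧ f = toK p / toK q ∧ (i ∈ p.vars ∨ i ∈ q.vars)}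

/-- `𝒜` : the smallest subset of `K` containing every variable and closed under the four
binary operations applied to expressions with disjoint variable sets. -/
inductive IsAE : K → Prop
  | var (i : ℕ) : IsAE (Xv i)
  | add {g h : K} : IsAE g → IsAE h → Disjoint (Vars g) (Vars h) → IsAE (g + h)
  | sub {g h : K} : IsAE g → IsAE h → Disjoint (Vars g) (Vars h) → IsAE (g - h)
  | mul {g h : K} : IsAE g → IsAE h → Disjoint (Vars g) (Vars h) → IsAE (g * h)
  | div {g h : K} : IsAE g → IsAE h → Disjoint (Vars g) (Vars h) → IsAE (g / h)

/-- The action `σ·f` of a permutation of the variables on `K`, substituting `σ(xᵢ)` for `xᵢ`. -/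
def permAct (σ : Equiv.Perm ℕ) : K ≃+* K :=
  IsFractionRing.ringEquivOfRingEquiv (renameEquiv ℝ σ).toRingEquiv

/-- `f ≅ g` : `f` and `g` are isomorphic, i.e. differ by a permutation of the variables. -/
def Iso (f g : K) : Prop := ∃ σ : Equiv.Perm ℕ, permAct σ f = g

/-- First type: `-f ∉ 𝒜`. -/
def FirstType (f : K) : Prop := IsAE f ∧ ¬ IsAE (-f)

/-- Second type: `-f ∈ 𝒜` but `f ≇ -f`. -/
def SecondType (f : K) : Prop := IsAE f ∧ IsAE (-f) ∧ ¬ Iso f (-f)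

/-- Third type: `-f ∈ 𝒜` and `f ≅ -f`. -/
def ThirdType (f : K) : Prop := IsAE f ∧ IsAE (-f) ∧ Iso f (-f)

/-- The four binary operators. -/
inductive Op : Type
  | add | sub | mul | div
deriving DecidableEq

/-- `EndsWith f o` : the arithmetic expression `f` ends with the operator `o`. -/
inductive EndsWith : K → Op → Prop
  | var (i : ℕ) : EndsWith (Xv i) Op.mul
  | add_base {i j : ℕ} (hij : i ≠ j) : EndsWith (Xv i + Xv j) Op.add
  | sub_base {i j : ℕ} (hij : i ≠ j) : EndsWith (Xv i - Xv j) Op.sub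
  | mul_base {i j : ℕ} (hij : i ≠ j) : EndsWith (Xv i * Xv j) Op.mul
  | div_base {i j : ℕ} (hij : i ≠ j) : EndsWith (Xv i / Xv j) Op.div
  | add_rec {g h : K} {o₁ o₂ : Op} : IsAE g → IsAE h → Disjoint (Vars g) (Vars h) →
      3 ≤ (Vars (g + h)).ncard → o₁ ≠ Op.sub → o₂ ≠ Op.sub →
      EndsWith g o₁ → EndsWith h o₂ → EndsWith (g + h) Op.add
  | mul_rec {g h : K} {o₁ o₂ : Op} : IsAE g → IsAE h → Disjoint (Vars g) (Vars h) →
      3 ≤ (Vars (g * h)).ncard → o₁ ≠ Op.div → o₂ ≠ Op.div →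
      EndsWith g o₁ → EndsWith h o₂ → EndsWith (g * h) Op.mul
  | div_rec {g h : K} {o₁ o₂ : Op} : IsAE g → IsAE h → Disjoint (Vars g) (Vars h) →
      3 ≤ (Vars (g / h)).ncard → o₁ ≠ Op.div → o₂ ≠ Op.div →
      EndsWith g o₁ → EndsWith h o₂ → EndsWith (g / h) Op.div
  | sub_rec {g h : K} {o₁ o₂ : Op} : IsAE g → IsAE h → Disjoint (Vars g) (Vars h) →
      3 ≤ (Vars (g - h)).ncard → o₁ ≠ Op.sub → o₂ ≠ Op.sub → FirstType h →
      EndsWith g o₁ → EndsWith h o₂ → EndsWith (g - h) Op.sub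

/-- `f` ends with one of the operators in `s`. -/
def EndsIn (f : K) (s : Set Op) : Prop := ∃ o ∈ s, EndsWith f o

/-- The binary operation on `K` corresponding to an operator. -/
def applyOp (o : Op) (a b : K) : K :=
  match o with
  | Op.add => a + b
  | Op.sub => a - b
  | Op.mul => a * b
  | Op.div => a / b

/-- The variable index set `{1, …, n}` (for the variables `x₁, …, xₙ`). -/
def varsUpTo (n : ℕ) : Set ℕ := {i | 1 ≤ i ∧ i ≤ n}

/-- `𝒜ₙ` : arithmetic expressions whose variable set is exactly `{x₁, …, xₙ}`. -/
def AEn (n : ℕ) : Set K := {f | IsAE f ∧ Vars f = varsUpTo n}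

/-- A multilinear polynomial: degree at most `1` in each variable. -/
def Multilinear (p : P) : Prop := ∀ i : ℕ, p.degreeOf i ≤ 1

/-- The key of a (multilinear) monomial: the sorted list of variables occurring in it;
keys are compared in the lexicographic order on lists. -/
def monKey (m : ℕ →₀ ℕ) : List ℕ := m.support.sort (· ≤ ·)

/-- A (multilinear) polynomial is monic if the coefficient of its lexicographically
leading (i.e. first) monomial is positive. -/
def MonicML (p : P) : Prop :=
  ∃ m ∈ p.support, 0 < p.coeff m ∧ ∀ m' ∈ p.support, monKey m ≤ monKey m'

/-- `MLForm f F₁ F₂` : `F₁ / F₂` is the multilinear form of `f`: `F₁, F₂` are coprime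
multilinear polynomials, `F₂` is monic, and `f = F₁ / F₂`. -/
def MLForm (f : K) (F₁ F₂ : P) : Prop :=
  Multilinear F₁ ∧ Multilinear F₂ ∧ IsRelPrime F₁ F₂ ∧ F₂ ≠ 0 ∧ MonicML F₂ ∧
    f = toK F₁ / toK F₂

/-- A monic arithmetic expression: the numerator of its multilinear form is monic as well. -/
def MonicAE (f : K) : Prop := ∃ F₁ F₂ : P, MLForm f F₁ F₂ ∧ MonicML F₁

/-- The isomorphism class of `f`. -/
def classOf (f : K) : Set K := {g | Iso f g}

/-- `S̄` : the set of isomorphism classes of elements of `S`. -/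
def classes (S : Set K) : Set (Set K) := classOf '' S

/-- `|S̄|` : the number of isomorphism classes of elements of `S`. -/
def countClasses (S : Set K) : ℕ := (classes S).ncard

/-- The number of isomorphism classes of elements of `S` depending on exactly `k` variables. -/
def gradeCount (S : Set K) (k : ℕ) : ℕ := countClasses {f ∈ S | (Vars f).ncard = k}

/-- `ω_n` for a graded family having `N k` elements in grade `k` : the sum over all
partitions `(k₁^{m₁},…,k_s^{m_s})` of `n` of `∏ⱼ C(N kⱼ + mⱼ - 1, mⱼ)`. -/
def omega (N : ℕ → ℕ) (n : ℕ) : ℕ :=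
  ∑ p : n.Partition,
    ∏ k ∈ p.parts.toFinset, Nat.choose (N k + p.parts.count k - 1) (p.parts.count k)

/-- `ω_n′` : the same sum restricted to non-trivial partitions, i.e. `ω_n - N n`. -/
def omega' (N : ℕ → ℕ) (n : ℕ) : ℕ := omega N n - N n

/-- `𝒜(s)` : arithmetic expressions ending with one of the operators in `s`. -/
def Aset (s : Set Op) : Set K := {f | IsAE f ∧ EndsIn f s}

/-- `ℱ(s)` : first-type arithmetic expressions ending with one of the operators in `s`. -/
def Fset (s : Set Op) : Set K := {f | FirstType f ∧ EndsIn f s}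

/-- `ℬ(s)` : second-type arithmetic expressions ending with one of the operators in `s`. -/
def Bset (s : Set Op) : Set K := {f | SecondType f ∧ EndsIn f s}

/-- `𝒞(s)` : third-type arithmetic expressions ending with one of the operators in `s`. -/
def Cset (s : Set Op) : Set K := {f | ThirdType f ∧ EndsIn f s}

/-- `ℳℬ(s)` : monic second-type arithmetic expressions ending with an operator in `s`. -/
def MBset (s : Set Op) : Set K := {f | SecondType f ∧ MonicAE f ∧ EndsIn f s}


/-- A decomposition of `f` as a sum `f = f₁ + ⋯ + f_n` (`n ≥ 2`, given by the multiset `s`)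
with pairwise disjoint variable sets whose union is `𝒱(f)`, each summand in `𝒜(×,÷)`. -/
def SumDecomp (f : K) (s : Multiset K) : Prop :=
  2 ≤ Multiset.card s ∧
  (∀ g ∈ s, IsAE g ∧ (EndsWith g Op.mul ∨ EndsWith g Op.div)) ∧
  s.Pairwise (fun a b => Disjoint (Vars a) (Vars b)) ∧
  f = s.sum ∧ Vars f = {i | ∃ g ∈ s, i ∈ Vars g}

/-! The set `𝒱(f)` consists of the `i` with `∂f/∂xᵢ ≠ 0`. An expression ending
with `×` or `÷` is linked: the graph joining `a` and `b` when `∂²f/∂xₐ∂x_b ≠ 0` is connected on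
`𝒱(f)`. Mixed derivatives across the blocks of a disjoint sum vanish, so two disjoint sums of linked
functions with the same value have the same blocks of variables, and corresponding summands differ
by constants. These constants are zero: embed `K` into Hahn series by `xᵢ ↦ t^(±eᵢ)`, with
exponents ordered lexicographically. The order of an arithmetic expression is never zero, because
the orders of `g` and `h` are distinct when they depend on different variables, and it is positive
for a suitable choice of signs; then adding a nonzero constant makes the order zero.

Uniqueness allows the summands to be negatives of arithmetic expressions, so it applies to `f`, to
`-f` and to `σ·f` alike. Hence `-f ∈ 𝒜` if and only if `-fⱼ ∈ 𝒜` for some `j`, and `f ≅ -f` if and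
only if negation preserves the multiset of isomorphism classes of the summands. In such a multiset
the classes which are not fixed by negation come in pairs of opposite classes. -/

section Derivation

variable {R A : Type*} [CommRing R] [CommRing A]

/-- The extension of a derivation `D` of `A` to a formally étale `A`-algebra `B`, for instance a
localization: the `B`-linear map induced by `D` on `B ⊗[A] Ω[A⁄R] ≃ Ω[B⁄R]`. -/
def extendDerivation [Algebra R A] (B : Type*) [CommRing B] [Algebra R B] [Algebra A B]
    [IsScalarTower R A B] [Algebra.FormallyEtale A B] (D : Derivation R A A) : Derivation R B B :=
  (((Algebra.linearMap A B).compDer D).liftKaehlerDifferential.liftBaseChange B ∘ₗ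
    (KaehlerDifferential.tensorKaehlerEquivOfFormallyEtale R A B).symm.toLinearMap).compDer
    (KaehlerDifferential.D R B)

theorem extendDerivation_algebraMap [Algebra R A] {B : Type*} [CommRing B] [Algebra R B]
    [Algebra A B] [IsScalarTower R A B] [Algebra.FormallyEtale A B] (D : Derivation R A A) (a : A) :
    extendDerivation B D (algebraMap A B a) = algebraMap A B (D a) := by
  simp [extendDerivation, KaehlerDifferential.tensorKaehlerEquivOfFormallyEtale_symm_D_algebraMap]

theorem derivation_eq_zero_of_isFractionRing {F : Type*} [Field F] [Algebra R F] [Algebra A F]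
    [IsFractionRing A F] {D : Derivation R F F} (hD : ∀ a, D (algebraMap A F a) = 0) : D = 0 := by
  ext f
  obtain ⟨a, b, -, rfl⟩ := IsFractionRing.div_surjective A f
  simp [Derivation.leibniz_div, hD]

end Derivation

section MvPolynomial

variable {σ R : Type*} [CommSemiring R]

theorem pderiv_eq_zero_iff_notMem_vars [NoZeroDivisors R] [CharZero R] {i : σ}
    {p : MvPolynomial σ R} : pderiv i p = 0 ↔ i ∉ p.vars := by
  refine ⟨fun h hi ↦ ?_, pderiv_eq_zero_of_notMem_vars⟩
  obtain ⟨m, hm, hmi⟩ := (mem_vars_iff_mem_support i).1 hi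
  have hle : Finsupp.single i 1 ≤ m := by simpa [Nat.one_le_iff_ne_zero] using hmi
  have hcoeff := coeff_pderiv (i := i) p (m - Finsupp.single i 1)
  rw [h, tsub_add_cancel_of_le hle, coeff_zero, eq_comm, mul_eq_zero] at hcoeff
  exact hcoeff.elim (mem_support_iff.1 hm) (Nat.cast_add_one_ne_zero _)

theorem degreeOf_pderiv_lt {i : σ} {p : MvPolynomial σ R} (hi : i ∈ p.vars) :
    (pderiv i p).degreeOf i < p.degreeOf i := by
  have hpos : 0 < p.degreeOf i := Nat.pos_of_ne_zero (mem_vars_iff_degreeOf_ne_zero.1 hi)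
  rw [degreeOf_lt_iff hpos]
  intro m hm
  have hmem : m + Finsupp.single i 1 ∈ p.support := by
    rw [mem_support_iff, coeff_pderiv] at hm
    exact mem_support_iff.2 (left_ne_zero_of_mul hm)
  have hle := monomial_le_degreeOf i hmem
  rwa [Finsupp.add_apply, Finsupp.single_eq_same] at hle

theorem pderiv_eq_zero_of_dvd [NoZeroDivisors R] [CharZero R] {i : σ} {p : MvPolynomial σ R}
    (h : p ∣ pderiv i p) : pderiv i p = 0 := by
  by_contra hne
  obtain ⟨q, hq⟩ := h
  have hlt := degreeOf_pderiv_lt (not_not.1 (mt pderiv_eq_zero_iff_notMem_vars.2 hne))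
  rw [hq] at hne hlt
  rw [degreeOf_mul_eq (left_ne_zero_of_mul hne) (right_ne_zero_of_mul hne)] at hlt
  lia

theorem pderiv_comm {R : Type*} [CommRing R] (i j : σ) (p : MvPolynomial σ R) :
    pderiv i (pderiv j p) = pderiv j (pderiv i p) := by
  have h : ⁅pderiv (R := R) i, pderiv j⁆ = 0 := derivation_ext fun k ↦ by
    classical
    rw [Derivation.commutator_apply]
    simp [pderiv_X, Pi.single_apply, apply_ite (pderiv _)]
  exact sub_eq_zero.1 (DFunLike.congr_fun h p)

end MvPolynomial

/-! ### Partial derivatives -/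

/-- The partial derivative `∂f/∂xᵢ` on `K`. -/
def partialDeriv (i : ℕ) : Derivation ℝ K K := extendDerivation K (pderiv i)

theorem partialDeriv_toK (i : ℕ) (p : P) : partialDeriv i (toK p) = toK (pderiv i p) :=
  extendDerivation_algebraMap _ p

theorem partialDeriv_Xv_self (i : ℕ) : partialDeriv i (Xv i) = 1 := by
  rw [Xv, partialDeriv_toK, pderiv_X_self, map_one]

theorem partialDeriv_Xv_of_ne {i j : ℕ} (h : j ≠ i) : partialDeriv i (Xv j) = 0 := by
  rw [Xv, partialDeriv_toK, pderiv_X_of_ne h, map_zero]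

theorem partialDeriv_comm (i j : ℕ) (f : K) :
    partialDeriv i (partialDeriv j f) = partialDeriv j (partialDeriv i f) := by
  have h : ⁅partialDeriv i, partialDeriv j⁆ = 0 :=
    derivation_eq_zero_of_isFractionRing (A := P) fun p ↦ by
      rw [Derivation.commutator_apply, ← toK, partialDeriv_toK, partialDeriv_toK, partialDeriv_toK,
        partialDeriv_toK, pderiv_comm, sub_self]
  exact sub_eq_zero.1 (DFunLike.congr_fun h f)

theorem toK_eq_zero_iff {p : P} : toK p = 0 ↔ p = 0 :=
  map_eq_zero_iff toK (IsFractionRing.injective P K)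

theorem toK_inj {p q : P} : toK p = toK q ↔ p = q :=
  (IsFractionRing.injective P K).eq_iff

theorem exists_isRelPrime_eq_div (f : K) :
    ∃ p q : P, q ≠ 0 ∧ IsRelPrime p q ∧ f = toK p / toK q := by
  obtain ⟨p, q, hpq, rfl⟩ := IsFractionRing.exists_reduced_fraction (A := P) f
  exact ⟨p, q, nonZeroDivisors.coe_ne_zero q, hpq, IsFractionRing.mk'_eq_div q⟩

theorem partialDeriv_ne_zero_iff {p q : P} (hq : q ≠ 0) (hpq : IsRelPrime p q) (i : ℕ) :
    partialDeriv i (toK p / toK q) ≠ 0 ↔ i ∈ p.vars ∨ i ∈ q.vars := by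
  have hquot : partialDeriv i (toK p / toK q) = 0 ↔ q * pderiv i p = p * pderiv i q := by
    rw [Derivation.leibniz_div, smul_eq_zero_iff_right (by simpa [toK_eq_zero_iff] using hq),
      partialDeriv_toK, partialDeriv_toK, smul_eq_mul, smul_eq_mul, sub_eq_zero, ← map_mul,
      ← map_mul, toK_inj]
  rw [ne_eq, hquot, not_iff_comm, not_or, ← pderiv_eq_zero_iff_notMem_vars,
    ← pderiv_eq_zero_iff_notMem_vars]
  refine ⟨fun h ↦ by rw [h.1, h.2, mul_zero, mul_zero], fun h ↦ ⟨?_, ?_⟩⟩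
  · exact pderiv_eq_zero_of_dvd (hpq.dvd_of_dvd_mul_left ⟨_, h⟩)
  · exact pderiv_eq_zero_of_dvd (hpq.symm.dvd_of_dvd_mul_left ⟨_, h.symm⟩)

/-- The quotient rule gives `q p' = p q'` when the derivative of a reduced fraction `p / q`
vanishes; then `p ∣ p'` and `q ∣ q'`, which for degree reasons forces `p' = q' = 0`. -/
theorem mem_Vars_iff {i : ℕ} {f : K} : i ∈ Vars f ↔ partialDeriv i f ≠ 0 := by
  constructor
  · rintro ⟨p, q, hq, hpq, rfl, hi⟩
    exact (partialDeriv_ne_zero_iff hq hpq i).2 hi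
  · obtain ⟨p, q, hq, hpq, rfl⟩ := exists_isRelPrime_eq_div f
    exact fun h ↦ ⟨p, q, hq, hpq, rfl, (partialDeriv_ne_zero_iff hq hpq i).1 h⟩

theorem notMem_Vars_iff {i : ℕ} {f : K} : i ∉ Vars f ↔ partialDeriv i f = 0 :=
  mem_Vars_iff.not_left

theorem Vars_neg (f : K) : Vars (-f) = Vars f := by
  ext i; simp only [mem_Vars_iff, map_neg, neg_ne_zero]

theorem Vars_zero : Vars 0 = ∅ := by
  ext i; simp only [mem_Vars_iff, map_zero, ne_eq, not_true, Set.mem_empty_iff_false]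

theorem Vars_Xv (i : ℕ) : Vars (Xv i) = {i} := by
  ext j
  rw [mem_Vars_iff, Set.mem_singleton_iff]
  obtain rfl | h := eq_or_ne j i
  · simp [partialDeriv_Xv_self]
  · simp [partialDeriv_Xv_of_ne h.symm, h]

theorem disjoint_Vars_Xv {i j : ℕ} (hij : i ≠ j) : Disjoint (Vars (Xv i)) (Vars (Xv j)) := by
  rwa [Vars_Xv, Vars_Xv, Set.disjoint_singleton]

theorem Vars_inv (f : K) : Vars f⁻¹ = Vars f := by
  ext i
  obtain rfl | hf := eq_or_ne f 0
  · rw [inv_zero]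
  · simp [mem_Vars_iff, Derivation.leibniz_inv, hf]

theorem Vars_add_subset (f g : K) : Vars (f + g) ⊆ Vars f ∪ Vars g := by
  intro i
  simp only [Set.mem_union, mem_Vars_iff, map_add]
  contrapose!
  rintro ⟨hf, hg⟩
  rw [hf, hg, add_zero]

theorem Vars_sub_subset (f g : K) : Vars (f - g) ⊆ Vars f ∪ Vars g := by
  simpa only [sub_eq_add_neg, Vars_neg] using Vars_add_subset f (-g)

theorem Vars_add {f g : K} (h : Disjoint (Vars f) (Vars g)) : Vars (f + g) = Vars f ∪ Vars g := by
  refine (Vars_add_subset f g).antisymm (Set.union_subset (fun i hi ↦ ?_) fun i hi ↦ ?_)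
  · rwa [mem_Vars_iff, map_add, notMem_Vars_iff.1 (h.notMem_of_mem_left hi), add_zero,
      ← mem_Vars_iff]
  · rwa [mem_Vars_iff, map_add, notMem_Vars_iff.1 (h.notMem_of_mem_right hi), zero_add,
      ← mem_Vars_iff]

theorem Vars_sub {f g : K} (h : Disjoint (Vars f) (Vars g)) : Vars (f - g) = Vars f ∪ Vars g := by
  rw [sub_eq_add_neg, Vars_add (by rwa [Vars_neg]), Vars_neg]

theorem ne_zero_of_Vars_nonempty {f : K} (h : (Vars f).Nonempty) : f ≠ 0 := by
  rintro rfl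
  rw [Vars_zero] at h
  exact Set.not_nonempty_empty h

theorem Vars_mul {f g : K} (hf : f ≠ 0) (hg : g ≠ 0) (h : Disjoint (Vars f) (Vars g)) :
    Vars (f * g) = Vars f ∪ Vars g := by
  ext i
  rw [Set.mem_union, mem_Vars_iff, Derivation.leibniz]
  by_cases hi : i ∈ Vars f
  · have hig := h.notMem_of_mem_left hi
    simpa [hi, hig, notMem_Vars_iff.1 hig, hg] using mem_Vars_iff.1 hi
  · simp [hi, notMem_Vars_iff.1 hi, hf, mem_Vars_iff]

theorem Vars_div {f g : K} (hf : f ≠ 0) (hg : g ≠ 0) (h : Disjoint (Vars f) (Vars g)) :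
    Vars (f / g) = Vars f ∪ Vars g := by
  rw [div_eq_mul_inv, Vars_mul hf (inv_ne_zero hg) (by rwa [Vars_inv]), Vars_inv]

theorem Vars_finite (f : K) : (Vars f).Finite := by
  obtain ⟨p, q, hq, hpq, rfl⟩ := exists_isRelPrime_eq_div f
  refine (p.vars ∪ q.vars).finite_toSet.subset fun i hi ↦ ?_
  simpa only [Finset.coe_union, Set.mem_union, Finset.mem_coe] using
    (partialDeriv_ne_zero_iff hq hpq i).1 (mem_Vars_iff.1 hi)

theorem exists_eq_algebraMap_of_Vars_eq_empty {f : K} (h : Vars f = ∅) :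
    ∃ r : ℝ, f = algebraMap ℝ K r := by
  obtain ⟨p, q, hq, hpq, rfl⟩ := exists_isRelPrime_eq_div f
  have hvars (i : ℕ) : i ∉ p.vars ∧ i ∉ q.vars := by
    rw [← not_or, ← partialDeriv_ne_zero_iff hq hpq, ← mem_Vars_iff, h]
    exact Set.notMem_empty i
  have hconst {r : P} (hr : ∀ i, i ∉ r.vars) : toK r = algebraMap ℝ K (r.coeff 0) := by
    rw [vars_eq_empty_iff_eq_C.1 (Finset.eq_empty_of_forall_notMem hr), coeff_zero_C]
    rfl
  refine ⟨p.coeff 0 / q.coeff 0, ?_⟩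
  rw [hconst fun i ↦ (hvars i).1, hconst fun i ↦ (hvars i).2, map_div₀]

theorem IsAE.Vars_nonempty {f : K} (h : IsAE f) : (Vars f).Nonempty := by
  induction h with
  | var i => rw [Vars_Xv]; exact Set.singleton_nonempty i
  | add _ _ hd ihg _ => rw [Vars_add hd]; exact ihg.inl
  | sub _ _ hd ihg _ => rw [Vars_sub hd]; exact ihg.inl
  | mul _ _ hd ihg ihh =>
    rw [Vars_mul (ne_zero_of_Vars_nonempty ihg) (ne_zero_of_Vars_nonempty ihh) hd]
    exact ihg.inl
  | div _ _ hd ihg ihh =>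
    rw [Vars_div (ne_zero_of_Vars_nonempty ihg) (ne_zero_of_Vars_nonempty ihh) hd]
    exact ihg.inl

theorem IsAE.ne_zero {f : K} (h : IsAE f) : f ≠ 0 := ne_zero_of_Vars_nonempty h.Vars_nonempty

theorem permAct_toK (σ : Equiv.Perm ℕ) (p : P) : permAct σ (toK p) = toK (rename σ p) :=
  IsFractionRing.ringEquivOfRingEquiv_algebraMap _ p

theorem permAct_Xv (σ : Equiv.Perm ℕ) (i : ℕ) : permAct σ (Xv i) = Xv (σ i) := by
  rw [Xv, permAct_toK, rename_X, Xv]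

theorem permAct_one (f : K) : permAct 1 f = f := by
  obtain ⟨p, q, -, -, rfl⟩ := exists_isRelPrime_eq_div f
  rw [map_div₀, permAct_toK, permAct_toK, Equiv.Perm.coe_one, rename_id_apply, rename_id_apply]

theorem permAct_mul (σ τ : Equiv.Perm ℕ) (f : K) :
    permAct (σ * τ) f = permAct σ (permAct τ f) := by
  obtain ⟨p, q, -, -, rfl⟩ := exists_isRelPrime_eq_div f
  simp only [map_div₀, permAct_toK, rename_rename, Equiv.Perm.coe_mul]

theorem partialDeriv_permAct (σ : Equiv.Perm ℕ) (i : ℕ) (f : K) :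
    partialDeriv (σ i) (permAct σ f) = permAct σ (partialDeriv i f) := by
  obtain ⟨p, q, -, -, rfl⟩ := exists_isRelPrime_eq_div f
  simp only [map_div₀, permAct_toK, Derivation.leibniz_div, partialDeriv_toK, smul_eq_mul, map_mul,
    map_sub, map_pow, map_inv₀, pderiv_rename σ.injective]

theorem mem_Vars_permAct {σ : Equiv.Perm ℕ} {i : ℕ} {f : K} :
    σ i ∈ Vars (permAct σ f) ↔ i ∈ Vars f := by
  rw [mem_Vars_iff, partialDeriv_permAct, map_ne_zero, mem_Vars_iff]

theorem Vars_permAct (σ : Equiv.Perm ℕ) (f : K) : Vars (permAct σ f) = σ '' Vars f := by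
  ext i
  rw [← σ.apply_symm_apply i, mem_Vars_permAct, σ.injective.mem_set_image]

theorem permAct_congr {σ τ : Equiv.Perm ℕ} {f : K} (h : ∀ i ∈ Vars f, σ i = τ i) :
    permAct σ f = permAct τ f := by
  obtain ⟨p, q, hq, hpq, rfl⟩ := exists_isRelPrime_eq_div f
  simp only [mem_Vars_iff, partialDeriv_ne_zero_iff hq hpq] at h
  have hrename {r : P} (hr : ∀ i ∈ r.vars, σ i = τ i) : rename σ r = rename τ r :=
    hom_congr_vars (by ext; simp) (fun i hi _ ↦ by simp [hr i hi]) rfl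
  rw [map_div₀, map_div₀, permAct_toK, permAct_toK, permAct_toK, permAct_toK,
    hrename fun i hi ↦ h i (.inl hi), hrename fun i hi ↦ h i (.inr hi)]

theorem disjoint_Vars_permAct (σ : Equiv.Perm ℕ) {f g : K} :
    Disjoint (Vars (permAct σ f)) (Vars (permAct σ g)) ↔ Disjoint (Vars f) (Vars g) := by
  rw [Vars_permAct, Vars_permAct, Set.disjoint_image_iff σ.injective]

theorem IsAE.permAct {f : K} (h : IsAE f) (σ : Equiv.Perm ℕ) : IsAE (permAct σ f) := by
  induction h with
  | var i => rw [permAct_Xv]; exact .var _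
  | add _ _ hd ihg ihh => rw [map_add]; exact ihg.add ihh ((disjoint_Vars_permAct σ).2 hd)
  | sub _ _ hd ihg ihh => rw [map_sub]; exact ihg.sub ihh ((disjoint_Vars_permAct σ).2 hd)
  | mul _ _ hd ihg ihh => rw [map_mul]; exact ihg.mul ihh ((disjoint_Vars_permAct σ).2 hd)
  | div _ _ hd ihg ihh => rw [map_div₀]; exact ihg.div ihh ((disjoint_Vars_permAct σ).2 hd)

/-! ### Linked rational functions -/

/-- `f` is linked if every partition of its variables into two nonempty parts is crossed by a
nonvanishing mixed partial derivative, i.e. the graph on `Vars f` joining `a` and `b` when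
`∂²f/∂xₐ∂x_b ≠ 0` is connected. Such an `f` is not a sum of two nonconstant functions of disjoint
sets of variables. -/
def Linked (f : K) : Prop :=
  ∀ A : Set ℕ, (Vars f ∩ A).Nonempty → (Vars f \ A).Nonempty →
    ∃ a ∈ A, ∃ b ∉ A, partialDeriv a (partialDeriv b f) ≠ 0

theorem Linked.neg {f : K} (h : Linked f) : Linked (-f) := by
  intro A h₁ h₂
  rw [Vars_neg] at h₁ h₂
  obtain ⟨a, ha, b, hb, hab⟩ := h A h₁ h₂
  exact ⟨a, ha, b, hb, by rwa [map_neg, map_neg, neg_ne_zero]⟩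

theorem Linked.permAct {f : K} (h : Linked f) (σ : Equiv.Perm ℕ) : Linked (permAct σ f) := by
  intro A h₁ h₂
  rw [Vars_permAct] at h₁ h₂
  obtain ⟨a, ha, b, hb, hab⟩ := h (σ ⁻¹' A) (by rwa [← Set.image_inter_nonempty_iff])
    (by rwa [← Set.image_nonempty (f := σ), Set.image_sdiff σ.injective,
      Set.image_preimage_eq _ σ.surjective])
  exact ⟨σ a, ha, σ b, hb, by
    rwa [partialDeriv_permAct, partialDeriv_permAct, map_ne_zero]⟩

theorem linked_Xv (i : ℕ) : Linked (Xv i) := by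
  rintro A ⟨a, hai, haA⟩ ⟨b, hbi, hbA⟩
  rw [Vars_Xv, Set.mem_singleton_iff] at hai hbi
  exact absurd (hai ▸ haA) (hbi ▸ hbA)

theorem partialDeriv_partialDeriv_mul_ne_zero {g h : K} {a b : ℕ} (ha : a ∈ Vars g)
    (hb : b ∈ Vars h) (hd : Disjoint (Vars g) (Vars h)) :
    partialDeriv a (partialDeriv b (g * h)) ≠ 0 := by
  have hbg : partialDeriv b g = 0 := notMem_Vars_iff.1 (hd.notMem_of_mem_right hb)
  have hah : partialDeriv a (partialDeriv b h) = 0 := by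
    rw [partialDeriv_comm, notMem_Vars_iff.1 (hd.notMem_of_mem_left ha), map_zero]
  simpa [Derivation.leibniz, hbg, hah] using ⟨mem_Vars_iff.1 hb, mem_Vars_iff.1 ha⟩

theorem linked_mul {g h : K} (hg : (Vars g).Nonempty) (hh : (Vars h).Nonempty)
    (hd : Disjoint (Vars g) (Vars h)) : Linked (g * h) := by
  have hVars := Vars_mul (ne_zero_of_Vars_nonempty hg) (ne_zero_of_Vars_nonempty hh) hd
  intro A h₁ h₂
  rw [hVars] at h₁ h₂
  have hcross {a b : ℕ} (ha : a ∈ A) (hb : b ∉ A)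
      (hab : a ∈ Vars g ∧ b ∈ Vars h ∨ a ∈ Vars h ∧ b ∈ Vars g) :
      ∃ a ∈ A, ∃ b ∉ A, partialDeriv a (partialDeriv b (g * h)) ≠ 0 := by
    refine ⟨a, ha, b, hb, ?_⟩
    rcases hab with ⟨hag, hbh⟩ | ⟨hah, hbg⟩
    · exact partialDeriv_partialDeriv_mul_ne_zero hag hbh hd
    · rw [mul_comm]
      exact partialDeriv_partialDeriv_mul_ne_zero hah hbg hd.symm
  obtain ⟨u, hu⟩ := hg
  obtain ⟨v, hv⟩ := hh
  obtain ⟨a, hag | hah, haA⟩ := h₁ <;> obtain ⟨b, hbg | hbh, hbA⟩ := h₂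
  · by_cases hvA : v ∈ A
    · exact hcross hvA hbA (.inr ⟨hv, hbg⟩)
    · exact hcross haA hvA (.inl ⟨hag, hv⟩)
  · exact hcross haA hbA (.inl ⟨hag, hbh⟩)
  · exact hcross haA hbA (.inr ⟨hah, hbg⟩)
  · by_cases huA : u ∈ A
    · exact hcross huA hbA (.inl ⟨hu, hbh⟩)
    · exact hcross haA huA (.inr ⟨hah, hu⟩)

theorem linked_div {g h : K} (hg : (Vars g).Nonempty) (hh : (Vars h).Nonempty)
    (hd : Disjoint (Vars g) (Vars h)) : Linked (g / h) := by
  rw [← Vars_inv h] at hh hd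
  rw [div_eq_mul_inv]
  exact linked_mul hg hh hd

theorem partialDeriv_partialDeriv_add_eq_zero {u v : K} {a b : ℕ} (ha : a ∈ Vars u)
    (hb : b ∉ Vars u) (hd : Disjoint (Vars u) (Vars v)) :
    partialDeriv a (partialDeriv b (u + v)) = 0 := by
  rw [map_add, notMem_Vars_iff.1 hb, zero_add, partialDeriv_comm,
    notMem_Vars_iff.1 (hd.notMem_of_mem_left ha), map_zero]

/-- Otherwise `Vars u` would split `Vars g`, but no mixed partial derivative of `u + v = g + r`
crosses `Vars u`. -/
theorem Linked.Vars_subset {u v g r : K} (hg : Linked g) (huv : Disjoint (Vars u) (Vars v))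
    (hgr : Disjoint (Vars g) (Vars r)) (h : u + v = g + r) (hug : (Vars g ∩ Vars u).Nonempty) :
    Vars g ⊆ Vars u := by
  by_contra hsub
  obtain ⟨a, ha, b, hb, hab⟩ := hg (Vars u) hug (Set.sdiff_nonempty.2 hsub)
  have hbg : b ∈ Vars g := by
    contrapose! hab
    rw [notMem_Vars_iff.1 hab, map_zero]
  refine hab ?_
  have hbr := notMem_Vars_iff.1 (hgr.notMem_of_mem_left hbg)
  rw [← partialDeriv_partialDeriv_add_eq_zero ha hb huv, h, map_add, map_add, hbr, map_zero,
    add_zero]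

theorem EndsWith.linked {f : K} {o : Op} (h : EndsWith f o) (ho : o = .mul ∨ o = .div) :
    Linked f := by
  cases h with
  | var i => exact linked_Xv i
  | mul_base hij =>
    exact linked_mul (IsAE.var _).Vars_nonempty (IsAE.var _).Vars_nonempty (disjoint_Vars_Xv hij)
  | div_base hij =>
    exact linked_div (IsAE.var _).Vars_nonempty (IsAE.var _).Vars_nonempty (disjoint_Vars_Xv hij)
  | mul_rec hg hh hd => exact linked_mul hg.Vars_nonempty hh.Vars_nonempty hd
  | div_rec hg hh hd => exact linked_div hg.Vars_nonempty hh.Vars_nonempty hd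
  | add_base | sub_base | add_rec | sub_rec => simp at ho

/-! ### Valuations -/

section HahnSeries

open HahnSeries

variable {σ Γ R : Type*} [AddCommMonoid Γ] [PartialOrder Γ] [IsOrderedCancelAddMonoid Γ]
  [CommRing R]

variable (R) in
/-- The substitution of the monomials of exponent `w i` in Hahn series for the variables. -/
def hahnEval (w : σ → Γ) : MvPolynomial σ R →ₐ[R] HahnSeries Γ R :=
  aeval fun i ↦ single (w i) 1

theorem hahnEval_monomial (w : σ → Γ) (m : σ →₀ ℕ) (r : R) :
    hahnEval R w (monomial m r) = single (Finsupp.weight w m) r := by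
  have hC (r : R) : hahnEval R w (C r) = single 0 r := by
    rw [hahnEval, aeval_C, HahnSeries.algebraMap_apply, HahnSeries.C_apply, Algebra.algebraMap_self,
      RingHom.id_apply]
  induction m using Finsupp.induction_linear generalizing r with
  | zero => rw [monomial_zero', hC, map_zero]
  | add m n hm hn => rw [← mul_one r, ← monomial_mul, map_mul, hm, hn, single_mul_single, map_add]
  | single i k =>
    rw [← C_mul_X_pow_eq_monomial, map_mul, map_pow, hC, hahnEval, aeval_X, single_pow,
      single_mul_single, Finsupp.weight_single, zero_add, one_pow, mul_one]

theorem hahnEval_apply (w : σ → Γ) (p : MvPolynomial σ R) :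
    hahnEval R w p = ∑ m ∈ p.support, single (Finsupp.weight w m) (p.coeff m) := by
  conv_lhs => rw [p.as_sum, map_sum]
  simp only [hahnEval_monomial]

theorem coeff_hahnEval {w : σ → Γ} (hw : Function.Injective (Finsupp.weight (R := ℕ) w))
    (p : MvPolynomial σ R) (m : σ →₀ ℕ) :
    (hahnEval R w p).coeff (Finsupp.weight w m) = p.coeff m := by
  classical
  simp +contextual [hahnEval_apply, HahnSeries.coeff_sum, coeff_single, hw.eq_iff]

theorem hahnEval_injective {w : σ → Γ} (hw : Function.Injective (Finsupp.weight (R := ℕ) w)) :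
    Function.Injective (hahnEval R w) := by
  intro p q h
  ext m
  rw [← coeff_hahnEval hw, h, coeff_hahnEval hw]

theorem exists_weight_eq_order {w : σ → Γ} {p : MvPolynomial σ R}
    (hp : hahnEval R w p ≠ 0) : ∃ m ∈ p.support, Finsupp.weight w m = (hahnEval R w p).order := by
  have h : (hahnEval R w p).coeff (hahnEval R w p).order ≠ 0 := coeff_order_eq_zero.not.2 hp
  nth_rw 1 [hahnEval_apply, HahnSeries.coeff_sum] at h
  obtain ⟨m, hm, hmp⟩ := Finset.exists_ne_zero_of_sum_ne_zero h
  exact ⟨m, hm, (by_contra fun hne ↦ hmp (coeff_single_of_ne (Ne.symm hne)))⟩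

theorem order_add_eq_left_of_lt {Γ : Type*} [Zero Γ] [LinearOrder Γ] {x y : HahnSeries Γ R}
    (hx : x ≠ 0) (h : x.order < y.order) : (x + y).order = x.order := by
  obtain rfl | hy := eq_or_ne y 0
  · rw [add_zero]
  have htop : (x + y).orderTop = x.orderTop := by
    refine orderTop_add_eq_left ?_
    rwa [← order_eq_orderTop_of_ne_zero hx, ← order_eq_orderTop_of_ne_zero hy, WithTop.coe_lt_coe]
  have hxy : x + y ≠ 0 := by rwa [← orderTop_ne_top, htop, orderTop_ne_top]
  rwa [← order_eq_orderTop_of_ne_zero hx, ← order_eq_orderTop_of_ne_zero hxy,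
    WithTop.coe_inj] at htop

end HahnSeries

/-- The exponent `±eᵢ` given to the variable `xᵢ`. -/
def varWeight (ε : ℕ → ℤˣ) (i : ℕ) : Lex (ℕ →₀ ℤ) := toLex (Finsupp.single i (ε i : ℤ))

theorem varWeight_neg (ε : ℕ → ℤˣ) (i : ℕ) : varWeight (-ε) i = -varWeight ε i := by
  simp [varWeight]

theorem varWeight_one_pos (i : ℕ) : 0 < varWeight 1 i := by
  refine lt_of_le_of_ne (Finsupp.toLex_monotone (Finsupp.single_nonneg.2 zero_le_one)) fun h ↦ ?_
  exact one_ne_zero (Finsupp.single_eq_zero.1 (toLex_eq_zero.1 h.symm))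

theorem weight_varWeight_apply (ε : ℕ → ℤˣ) (m : ℕ →₀ ℕ) (i : ℕ) :
    ofLex (Finsupp.weight (varWeight ε) m) i = m i * (ε i : ℤ) := by
  induction m using Finsupp.induction_linear with
  | zero => simp
  | add m n hm hn => rw [map_add, ofLex_add, Finsupp.add_apply, hm, hn]; simp [add_mul]
  | single j k =>
    have hk : ofLex (k • varWeight ε j) = k • Finsupp.single j (ε j : ℤ) := rfl
    rw [Finsupp.weight_single, hk]
    obtain rfl | hij := eq_or_ne j i <;> simp [*]

theorem weight_varWeight_injective (ε : ℕ → ℤˣ) :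
    Function.Injective (Finsupp.weight (R := ℕ) (varWeight ε)) := by
  intro m m' h
  ext i
  have hi := weight_varWeight_apply ε m i
  rw [h, weight_varWeight_apply] at hi
  exact_mod_cast (mul_right_cancel₀ (ε i).ne_zero hi).symm

/-- The extension of `hahnEval` to `K`. -/
def hahnEmbedding (ε : ℕ → ℤˣ) : K →ₐ[ℝ] HahnSeries (Lex (ℕ →₀ ℤ)) ℝ :=
  IsFractionRing.liftAlgHom (hahnEval_injective (weight_varWeight_injective ε))

theorem hahnEmbedding_toK (ε : ℕ → ℤˣ) (p : P) :
    hahnEmbedding ε (toK p) = hahnEval ℝ (varWeight ε) p := by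
  rw [hahnEmbedding, toK, IsFractionRing.coe_liftAlgHom]
  exact IsFractionRing.lift_algebraMap _ p

theorem hahnEmbedding_ne_zero (ε : ℕ → ℤˣ) {f : K} (hf : f ≠ 0) : hahnEmbedding ε f ≠ 0 :=
  (map_ne_zero _).2 hf

theorem exists_eq_toK_div_toK (f : K) :
    ∃ p q : P, q ≠ 0 ∧ f = toK p / toK q ∧ ↑p.vars ⊆ Vars f ∧ ↑q.vars ⊆ Vars f := by
  obtain ⟨p, q, hq, hpq, rfl⟩ := exists_isRelPrime_eq_div f
  exact ⟨p, q, hq, rfl, fun i hi ↦ ⟨p, q, hq, hpq, rfl, .inl hi⟩,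
    fun i hi ↦ ⟨p, q, hq, hpq, rfl, .inr hi⟩⟩

theorem hahnEmbedding_congr {ε ε' : ℕ → ℤˣ} {f : K} (h : ∀ i ∈ Vars f, ε i = ε' i) :
    hahnEmbedding ε f = hahnEmbedding ε' f := by
  obtain ⟨p, q, -, rfl, hp, hq⟩ := exists_eq_toK_div_toK f
  have key {r : P} (hr : ↑r.vars ⊆ Vars (toK p / toK q)) :
      hahnEmbedding ε (toK r) = hahnEmbedding ε' (toK r) := by
    rw [hahnEmbedding_toK, hahnEmbedding_toK]
    exact eval₂Hom_congr' rfl (fun i hi _ ↦ by simp [varWeight, h i (hr hi)]) rfl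
  rw [map_div₀, map_div₀, key hp, key hq]

/-- The order of the Hahn series `hahnEmbedding ε f`, i.e. the exponent of its leading term; as
`ε` varies, this is a family of valuations of `K`. -/
def order (ε : ℕ → ℤˣ) (f : K) : Lex (ℕ →₀ ℤ) := (hahnEmbedding ε f).order

theorem order_Xv (ε : ℕ → ℤˣ) (i : ℕ) : order ε (Xv i) = varWeight ε i := by
  rw [order, Xv, hahnEmbedding_toK, hahnEval, aeval_X, HahnSeries.order_single one_ne_zero]

theorem ne_zero_of_order_ne_zero {ε : ℕ → ℤˣ} {f : K} (h : order ε f ≠ 0) : f ≠ 0 := by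
  rintro rfl
  simp [order] at h

theorem order_neg (ε : ℕ → ℤˣ) (f : K) : order ε (-f) = order ε f := by
  rw [order, map_neg, HahnSeries.order_neg, order]

theorem order_mul (ε : ℕ → ℤˣ) {f g : K} (hf : f ≠ 0) (hg : g ≠ 0) :
    order ε (f * g) = order ε f + order ε g := by
  rw [order, map_mul, HahnSeries.order_mul (hahnEmbedding_ne_zero ε hf)
    (hahnEmbedding_ne_zero ε hg), order, order]

theorem order_algebraMap (ε : ℕ → ℤˣ) (r : ℝ) : order ε (algebraMap ℝ K r) = 0 := by
  rw [order, AlgHom.commutes, HahnSeries.algebraMap_apply, HahnSeries.order_C]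

theorem order_inv (ε : ℕ → ℤˣ) (f : K) : order ε f⁻¹ = -order ε f := by
  obtain rfl | hf := eq_or_ne f 0
  · simp [order]
  · rw [eq_neg_iff_add_eq_zero, ← order_mul ε (inv_ne_zero hf) hf, inv_mul_cancel₀ hf,
      ← map_one (algebraMap ℝ K), order_algebraMap]

theorem order_div (ε : ℕ → ℤˣ) {f g : K} (hf : f ≠ 0) (hg : g ≠ 0) :
    order ε (f / g) = order ε f - order ε g := by
  rw [div_eq_mul_inv, order_mul ε hf (inv_ne_zero hg), order_inv, sub_eq_add_neg]

theorem order_add {ε : ℕ → ℤˣ} {f g : K} (hf : f ≠ 0) (hg : g ≠ 0)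
    (h : order ε f ≠ order ε g) : order ε (f + g) = min (order ε f) (order ε g) := by
  have hlt {f g : K} (hf : f ≠ 0) (h : order ε f < order ε g) :
      order ε (f + g) = min (order ε f) (order ε g) := by
    rw [min_eq_left h.le, order, map_add]
    exact order_add_eq_left_of_lt (hahnEmbedding_ne_zero ε hf) h
  rcases h.lt_or_gt with h | h
  · exact hlt hf h
  · rw [add_comm, min_comm, hlt hg h]

theorem order_apply_of_notMem_Vars (ε : ℕ → ℤˣ) {f : K} {i : ℕ} (hi : i ∉ Vars f) :
    ofLex (order ε f) i = 0 := by
  obtain rfl | hf := eq_or_ne f 0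
  · simp [order]
  obtain ⟨p, q, hq, rfl, hpf, hqf⟩ := exists_eq_toK_div_toK f
  have key {r : P} (hr : r ≠ 0) (hri : i ∉ r.vars) : ofLex (order ε (toK r)) i = 0 := by
    have hne := hahnEmbedding_ne_zero ε (toK_eq_zero_iff.not.2 hr)
    rw [hahnEmbedding_toK] at hne
    obtain ⟨m, hm, hmr⟩ := exists_weight_eq_order hne
    rw [order, hahnEmbedding_toK, ← hmr, weight_varWeight_apply]
    have hmi : m i = 0 := by
      contrapose! hri
      exact (mem_vars_iff_mem_support i).2 ⟨m, hm, Finsupp.mem_support_iff.2 hri⟩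
    rw [hmi, Nat.cast_zero, zero_mul]
  have hp : p ≠ 0 := by rintro rfl; simp at hf
  rw [order_div ε (toK_eq_zero_iff.not.2 hp) (toK_eq_zero_iff.not.2 hq), ofLex_sub,
    Finsupp.sub_apply, key hp fun h ↦ hi (hpf h), key hq fun h ↦ hi (hqf h), sub_zero]

theorem order_ne_order {ε : ℕ → ℤˣ} {f g : K} (hf : order ε f ≠ 0)
    (h : Disjoint (Vars f) (Vars g)) : order ε f ≠ order ε g := by
  contrapose! hf
  refine ofLex.injective (Finsupp.ext fun i ↦ ?_)
  by_cases hi : i ∈ Vars f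
  · rw [hf, order_apply_of_notMem_Vars ε (h.notMem_of_mem_left hi)]
    rfl
  · exact order_apply_of_notMem_Vars ε hi

theorem IsAE.order_ne_zero {f : K} (hf : IsAE f) (ε : ℕ → ℤˣ) : order ε f ≠ 0 := by
  have hadd {g h : K} (hg : g ≠ 0) (hh : h ≠ 0) (hd : Disjoint (Vars g) (Vars h))
      (hg' : order ε g ≠ 0) (hh' : order ε h ≠ 0) : order ε (g + h) ≠ 0 := by
    rw [order_add hg hh (order_ne_order hg' hd)]
    exact min_rec' (· ≠ 0) hg' hh'
  induction hf with
  | var i =>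
    rw [order_Xv]
    exact fun h ↦ (ε i).ne_zero (Finsupp.single_eq_zero.1 (toLex_eq_zero.1 h))
  | add hg hh hd ihg ihh => exact hadd hg.ne_zero hh.ne_zero hd ihg ihh
  | @sub g h hg hh hd ihg ihh =>
    rw [sub_eq_add_neg]
    exact hadd hg.ne_zero (neg_ne_zero.2 hh.ne_zero) (by rwa [Vars_neg]) ihg (by rwa [order_neg])
  | @mul g h hg hh hd ihg _ =>
    have hne := order_ne_order (ε := ε) (g := h⁻¹) ihg (by rwa [Vars_inv])
    rwa [order_inv, Ne, eq_neg_iff_add_eq_zero, ← order_mul ε hg.ne_zero hh.ne_zero] at hne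
  | div hg hh hd ihg _ =>
    rw [order_div ε hg.ne_zero hh.ne_zero]
    exact sub_ne_zero.2 (order_ne_order ihg hd)

theorem order_congr {ε ε' : ℕ → ℤˣ} {f : K} (h : ∀ i ∈ Vars f, ε i = ε' i) :
    order ε f = order ε' f := by
  rw [order, hahnEmbedding_congr h, order]

theorem exists_order_eq {g h : K} (hd : Disjoint (Vars g) (Vars h)) (ε₁ ε₂ : ℕ → ℤˣ) :
    ∃ ε, order ε g = order ε₁ g ∧ order (-ε) g = order (-ε₁) g ∧
      order ε h = order ε₂ h ∧ order (-ε) h = order (-ε₂) h := by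
  classical
  have hg : ∀ i ∈ Vars g, (Vars g).piecewise ε₁ ε₂ i = ε₁ i :=
    fun i hi ↦ Set.piecewise_eq_of_mem _ _ _ hi
  have hh : ∀ i ∈ Vars h, (Vars g).piecewise ε₁ ε₂ i = ε₂ i :=
    fun i hi ↦ Set.piecewise_eq_of_notMem _ _ _ (hd.notMem_of_mem_right hi)
  exact ⟨(Vars g).piecewise ε₁ ε₂, order_congr hg,
    order_congr fun i hi ↦ congrArg Neg.neg (hg i hi), order_congr hh,
    order_congr fun i hi ↦ congrArg Neg.neg (hh i hi)⟩

theorem exists_order_pos_add {g h : K} (hg : ∀ ε, order ε g ≠ 0)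
    (hd : Disjoint (Vars g) (Vars h)) (hg_pos : ∃ ε, 0 < order ε g ∧ order (-ε) g < 0)
    (hh_pos : ∃ ε, 0 < order ε h) :
    ∃ ε, 0 < order ε (g + h) ∧ order (-ε) (g + h) < 0 := by
  obtain ⟨ε₁, hg₁, hg₂⟩ := hg_pos
  obtain ⟨ε₂, hh⟩ := hh_pos
  obtain ⟨ε, hεg, hεg', hεh, -⟩ := exists_order_eq hd ε₁ ε₂
  refine ⟨ε, ?_, ?_⟩ <;> rw [order_add (ne_zero_of_order_ne_zero (hg 1))
    (ne_zero_of_order_ne_zero hh.ne') (order_ne_order (hg _) hd)]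
  · rw [hεg, hεh]
    exact lt_min hg₁ hh
  · rw [hεg']
    exact min_lt_of_left_lt hg₂

/-- The signs of the denominator of a quotient have to be reversed, which is why both signs of the
order are obtained together. -/
theorem IsAE.exists_order_pos {f : K} (hf : IsAE f) :
    ∃ ε : ℕ → ℤˣ, 0 < order ε f ∧ order (-ε) f < 0 := by
  induction hf with
  | var i =>
    refine ⟨1, ?_, ?_⟩
    · rw [order_Xv]
      exact varWeight_one_pos i
    · rw [order_Xv, varWeight_neg]
      exact neg_neg_of_pos (varWeight_one_pos i)
  | add hg _ hd ihg ihh =>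
    exact exists_order_pos_add hg.order_ne_zero hd ihg (ihh.imp fun _ h ↦ h.1)
  | sub hg _ hd ihg ihh =>
    rw [sub_eq_add_neg]
    exact exists_order_pos_add hg.order_ne_zero (by rwa [Vars_neg]) ihg
      (ihh.imp fun ε h ↦ (order_neg ε _).symm ▸ h.1)
  | mul hg hh hd ihg ihh =>
    obtain ⟨ε₁, hg₁, hg₂⟩ := ihg
    obtain ⟨ε₂, hh₁, hh₂⟩ := ihh
    obtain ⟨ε, hεg, hεg', hεh, hεh'⟩ := exists_order_eq hd ε₁ ε₂
    refine ⟨ε, ?_, ?_⟩ <;> rw [order_mul _ hg.ne_zero hh.ne_zero]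
    · rw [hεg, hεh]
      exact add_pos hg₁ hh₁
    · rw [hεg', hεh']
      exact add_neg hg₂ hh₂
  | div hg hh hd ihg ihh =>
    obtain ⟨ε₁, hg₁, hg₂⟩ := ihg
    obtain ⟨ε₂, hh₁, hh₂⟩ := ihh
    obtain ⟨ε, hεg, hεg', hεh, hεh'⟩ := exists_order_eq hd ε₁ (-ε₂)
    rw [neg_neg] at hεh'
    refine ⟨ε, ?_, ?_⟩ <;> rw [order_div _ hg.ne_zero hh.ne_zero]
    · rw [hεg, hεh]
      exact sub_pos.2 (hh₂.trans hg₁)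
    · rw [hεg', hεh']
      exact sub_neg.2 (hg₂.trans hh₁)

/-- `f` or `-f` is an arithmetic expression: the summands met when an arithmetic expression is
expanded into a sum are of this kind. -/
def IsSignedAE (f : K) : Prop := IsAE f ∨ IsAE (-f)

theorem IsSignedAE.order_ne_zero {f : K} (hf : IsSignedAE f) (ε : ℕ → ℤˣ) : order ε f ≠ 0 := by
  obtain hf | hf := hf
  · exact hf.order_ne_zero ε
  · exact order_neg ε f ▸ hf.order_ne_zero ε

theorem IsSignedAE.exists_order_pos {f : K} (hf : IsSignedAE f) : ∃ ε, 0 < order ε f := by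
  obtain hf | hf := hf
  · exact hf.exists_order_pos.imp fun _ h ↦ h.1
  · exact hf.exists_order_pos.imp fun ε h ↦ order_neg ε f ▸ h.1

/-- If `f` has positive order, then `f + r` has order `0` for every constant `r ≠ 0`. -/
theorem IsSignedAE.eq_of_Vars_sub_eq_empty {f g : K} (hf : IsSignedAE f) (hg : IsSignedAE g)
    (h : Vars (g - f) = ∅) : g = f := by
  obtain ⟨r, hr⟩ := exists_eq_algebraMap_of_Vars_eq_empty h
  obtain ⟨ε, hpos⟩ := hf.exists_order_pos
  by_contra hne
  have hr₀ : algebraMap ℝ K r ≠ 0 := hr ▸ sub_ne_zero.2 hne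
  refine hg.order_ne_zero ε ?_
  rw [← add_sub_cancel f g, hr, order_add (ne_zero_of_order_ne_zero hpos.ne') hr₀
    (by rw [order_algebraMap]; exact hpos.ne'), order_algebraMap, min_eq_right hpos.le]

/-! ### Disjoint sums -/

section MultisetPairwise

variable {α β : Type*} {r : α → α → Prop} [Std.Symm r]

theorem multiset_pairwise_cons {a : α} {s : Multiset α} :
    (a ::ₘ s).Pairwise r ↔ (∀ b ∈ s, r a b) ∧ s.Pairwise r := by
  induction s using Quotient.inductionOn with
  | _ l =>
    simp only [Multiset.quot_mk_to_coe, Multiset.cons_coe, Multiset.pairwise_coe_iff_pairwise,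
      List.pairwise_cons, Multiset.mem_coe]

theorem multiset_pairwise_add {s t : Multiset α} :
    (s + t).Pairwise r ↔ s.Pairwise r ∧ t.Pairwise r ∧ ∀ a ∈ s, ∀ b ∈ t, r a b := by
  induction s using Multiset.induction with
  | empty => simp [Multiset.pairwise_zero]
  | cons a s ih =>
    simp only [Multiset.cons_add, multiset_pairwise_cons, ih, Multiset.mem_add, Multiset.mem_cons,
      or_imp, forall_and, forall_eq]
    tauto

theorem multiset_pairwise_map {r' : β → β → Prop} [Std.Symm r'] {φ : α → β}
    (h : ∀ a b, r a b → r' (φ a) (φ b)) {s : Multiset α} (hs : s.Pairwise r) :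
    (s.map φ).Pairwise r' := by
  induction s using Multiset.induction with
  | empty => exact Multiset.pairwise_zero r'
  | cons a s ih =>
    rw [multiset_pairwise_cons] at hs
    rw [Multiset.map_cons, multiset_pairwise_cons]
    exact ⟨Multiset.forall_mem_map_iff.2 fun b hb ↦ h a b (hs.1 b hb), ih hs.2⟩

end MultisetPairwise

instance : Std.Symm fun a b : K ↦ Disjoint (Vars a) (Vars b) := ⟨fun _ _ h ↦ h.symm⟩

/-- `s` is a decomposition of `f` into summands from `A` with pairwise disjoint sets of
variables. -/
structure IsDisjointSum (A : Set K) (f : K) (s : Multiset K) : Prop where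
  mem : ∀ g ∈ s, g ∈ A
  pairwise : s.Pairwise fun a b ↦ Disjoint (Vars a) (Vars b)
  sum_eq : s.sum = f

theorem Vars_sum_subset (s : Multiset K) : Vars s.sum ⊆ {i | ∃ g ∈ s, i ∈ Vars g} := by
  induction s using Multiset.induction with
  | empty => simp [Vars_zero]
  | cons a s ih =>
    rw [Multiset.sum_cons]
    intro i hi
    rcases Vars_add_subset _ _ hi with hia | his
    · exact ⟨a, Multiset.mem_cons_self a s, hia⟩
    · obtain ⟨g, hg, hig⟩ := ih his
      exact ⟨g, Multiset.mem_cons_of_mem hg, hig⟩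

theorem disjoint_Vars_sum {a : K} {s : Multiset K} (h : ∀ b ∈ s, Disjoint (Vars a) (Vars b)) :
    Disjoint (Vars a) (Vars s.sum) := by
  refine Set.disjoint_left.2 fun i hi his ↦ ?_
  obtain ⟨g, hg, hig⟩ := Vars_sum_subset s his
  exact Set.disjoint_left.1 (h g hg) hi hig

namespace IsDisjointSum

variable {A : Set K} {f g : K} {s t : Multiset K}

theorem singleton (hf : f ∈ A) : IsDisjointSum A f {f} where
  mem := by simpa using hf
  pairwise := multiset_pairwise_cons.2 ⟨by simp, Multiset.pairwise_zero _⟩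
  sum_eq := Multiset.sum_singleton f

theorem of_cons {a : K} (h : IsDisjointSum A f (a ::ₘ s)) : a ∈ A ∧ Disjoint (Vars a) (Vars s.sum) ∧
    IsDisjointSum A s.sum s ∧ a + s.sum = f := by
  have hp := multiset_pairwise_cons.1 h.pairwise
  exact ⟨h.mem a (Multiset.mem_cons_self a s), disjoint_Vars_sum hp.1,
    ⟨fun b hb ↦ h.mem b (Multiset.mem_cons_of_mem hb), hp.2, rfl⟩, by
      rw [← Multiset.sum_cons, h.sum_eq]⟩

theorem Vars_eq (h : IsDisjointSum A f s) : Vars f = {i | ∃ g ∈ s, i ∈ Vars g} := by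
  induction s using Multiset.induction generalizing f with
  | empty => simp [← h.sum_eq, Vars_zero]
  | cons a s ih =>
    obtain ⟨-, hd, hs, rfl⟩ := h.of_cons
    ext i
    simp [Vars_add hd, ih hs]

theorem add (hs : IsDisjointSum A f s) (ht : IsDisjointSum A g t)
    (hd : Disjoint (Vars f) (Vars g)) : IsDisjointSum A (f + g) (s + t) where
  mem a ha := (Multiset.mem_add.1 ha).elim (hs.mem a) (ht.mem a)
  pairwise := multiset_pairwise_add.2 ⟨hs.pairwise, ht.pairwise, fun a ha b hb ↦ hd.mono
    (hs.Vars_eq ▸ fun _ hi ↦ ⟨a, ha, hi⟩) (ht.Vars_eq ▸ fun _ hi ↦ ⟨b, hb, hi⟩)⟩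
  sum_eq := by rw [Multiset.sum_add, hs.sum_eq, ht.sum_eq]

theorem mono {B : Set K} (hAB : A ⊆ B) (h : IsDisjointSum A f s) : IsDisjointSum B f s :=
  ⟨fun a ha ↦ hAB (h.mem a ha), h.pairwise, h.sum_eq⟩

theorem map {φ : K →+ K} (hA : ∀ a ∈ A, φ a ∈ A)
    (hφ : ∀ a b, Disjoint (Vars a) (Vars b) → Disjoint (Vars (φ a)) (Vars (φ b)))
    (h : IsDisjointSum A f s) : IsDisjointSum A (φ f) (s.map φ) where
  mem := Multiset.forall_mem_map_iff.2 fun a ha ↦ hA a (h.mem a ha)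
  pairwise := multiset_pairwise_map (r' := fun a b ↦ Disjoint (Vars a) (Vars b)) hφ h.pairwise
  sum_eq := by rw [← map_multiset_sum, h.sum_eq]

end IsDisjointSum

/-- The building blocks of arithmetic expressions with respect to sums: `IsDisjointSum signedAtoms`
decompositions exist and are unique. -/
def signedAtoms : Set K := {f | IsSignedAE f ∧ Linked f}

theorem IsSignedAE.neg {f : K} (h : IsSignedAE f) : IsSignedAE (-f) := by
  rw [IsSignedAE, neg_neg]
  exact h.symm

theorem IsSignedAE.permAct {f : K} (h : IsSignedAE f) (σ : Equiv.Perm ℕ) :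
    IsSignedAE (permAct σ f) := by
  rw [IsSignedAE, ← map_neg]
  exact h.imp (·.permAct σ) (·.permAct σ)

theorem IsSignedAE.Vars_nonempty {f : K} (h : IsSignedAE f) : (Vars f).Nonempty := by
  obtain h | h := h
  · exact h.Vars_nonempty
  · exact Vars_neg f ▸ h.Vars_nonempty

theorem Vars_sub_subset_inter {u v g r : K} (h : u + v = g + r) :
    Vars (u - g) ⊆ (Vars u ∪ Vars g) ∩ (Vars v ∪ Vars r) := by
  refine Set.subset_inter (Vars_sub_subset u g) ?_
  rw [show u - g = r - v by linear_combination h, Set.union_comm]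
  exact Vars_sub_subset r v

theorem eq_of_add_eq_add {u v g r : K} (hu : u ∈ signedAtoms) (hg : g ∈ signedAtoms)
    (huv : Disjoint (Vars u) (Vars v)) (hgr : Disjoint (Vars g) (Vars r)) (h : u + v = g + r)
    (hug : (Vars u ∩ Vars g).Nonempty) : u = g := by
  have hVars : Vars u = Vars g := (hu.2.Vars_subset hgr huv h.symm hug).antisymm
    (hg.2.Vars_subset huv hgr h (Set.inter_comm _ _ ▸ hug))
  refine hg.1.eq_of_Vars_sub_eq_empty hu.1 (Set.subset_empty_iff.1 ?_)
  rw [← hVars] at hgr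
  rw [← (Set.disjoint_union_right.2 ⟨huv, hgr⟩).inter_eq]
  simpa only [← hVars, Set.union_self] using Vars_sub_subset_inter h

theorem IsDisjointSum.unique {f : K} {s t : Multiset K} (hs : IsDisjointSum signedAtoms f s)
    (ht : IsDisjointSum signedAtoms f t) : s = t := by
  induction s using Multiset.induction generalizing f t with
  | empty =>
    by_contra! hne
    obtain ⟨g, hg⟩ := Multiset.exists_mem_of_ne_zero hne.symm
    obtain ⟨i, hi⟩ := (ht.mem g hg).1.Vars_nonempty
    have hif : i ∈ Vars f := ht.Vars_eq ▸ ⟨g, hg, hi⟩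
    simp [hs.Vars_eq] at hif
  | cons u s ih =>
    obtain ⟨hu, hus, hs', hsum⟩ := hs.of_cons
    obtain ⟨i, hi⟩ := hu.1.Vars_nonempty
    have hif : i ∈ Vars f := hs.Vars_eq ▸ ⟨u, Multiset.mem_cons_self u s, hi⟩
    obtain ⟨g, hg, hig⟩ := ht.Vars_eq ▸ hif
    obtain ⟨t, rfl⟩ := Multiset.exists_cons_of_mem hg
    obtain ⟨hgA, hgt, ht', htsum⟩ := ht.of_cons
    have heq : u + s.sum = g + t.sum := hsum.trans htsum.symm
    obtain rfl : u = g := eq_of_add_eq_add hu hgA hus hgt heq ⟨i, hi, hig⟩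
    rw [ih hs' (add_left_cancel heq ▸ ht')]

theorem IsDisjointSum.neg {f : K} {s : Multiset K} (h : IsDisjointSum signedAtoms f s) :
    IsDisjointSum signedAtoms (-f) (s.map (-·)) :=
  h.map (φ := negAddMonoidHom) (fun _ ha ↦ ⟨ha.1.neg, ha.2.neg⟩) fun a b hab ↦ by
    simpa only [negAddMonoidHom_apply, Vars_neg] using hab

theorem IsDisjointSum.permAct {f : K} {s : Multiset K} (h : IsDisjointSum signedAtoms f s)
    (σ : Equiv.Perm ℕ) : IsDisjointSum signedAtoms (permAct σ f) (s.map (permAct σ)) :=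
  h.map (φ := (_root_.permAct σ : K →+ K)) (fun _ ha ↦ ⟨ha.1.permAct σ, ha.2.permAct σ⟩)
    fun _ _ ↦ (disjoint_Vars_permAct σ).2

theorem IsAE.exists_isDisjointSum {f : K} (hf : IsAE f) :
    ∃ s, IsDisjointSum signedAtoms f s ∧ ∃ g ∈ s, IsAE g := by
  have hatom {f : K} (hf : IsAE f) (hl : Linked f) :
      ∃ s, IsDisjointSum signedAtoms f s ∧ ∃ g ∈ s, IsAE g :=
    ⟨{f}, .singleton ⟨.inl hf, hl⟩, f, Multiset.mem_singleton_self f, hf⟩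
  induction hf with
  | var i => exact hatom (.var i) (linked_Xv i)
  | add _ _ hd ihg ihh =>
    obtain ⟨s, hs, a, ha, haAE⟩ := ihg
    obtain ⟨t, ht, -⟩ := ihh
    exact ⟨s + t, hs.add ht hd, a, Multiset.mem_add.2 (.inl ha), haAE⟩
  | sub _ _ hd ihg ihh =>
    obtain ⟨s, hs, a, ha, haAE⟩ := ihg
    obtain ⟨t, ht, -⟩ := ihh
    rw [sub_eq_add_neg]
    exact ⟨_, hs.add ht.neg (by rwa [Vars_neg]), a, Multiset.mem_add.2 (.inl ha), haAE⟩
  | mul hg hh hd => exact hatom (.mul hg hh hd) (linked_mul hg.Vars_nonempty hh.Vars_nonempty hd)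
  | div hg hh hd => exact hatom (.div hg hh hd) (linked_div hg.Vars_nonempty hh.Vars_nonempty hd)

theorem IsAE.add_isSignedAE {f g : K} (hf : IsAE f) (hg : IsSignedAE g)
    (hd : Disjoint (Vars f) (Vars g)) : IsAE (f + g) := by
  obtain hg | hg := hg
  · exact hf.add hg hd
  · rw [← sub_neg_eq_add]
    exact hf.sub hg (by rwa [Vars_neg])

theorem IsAE.add_sum {f : K} {s : Multiset K} (hf : IsAE f)
    (hs : IsDisjointSum {g | IsSignedAE g} s.sum s) (hd : Disjoint (Vars f) (Vars s.sum)) :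
    IsAE (f + s.sum) := by
  induction s using Multiset.induction generalizing f with
  | empty => rwa [Multiset.sum_zero, add_zero]
  | cons a s ih =>
    obtain ⟨ha, has, hs', -⟩ := hs.of_cons
    rw [Multiset.sum_cons, Vars_add has, Set.disjoint_union_right] at hd
    rw [Multiset.sum_cons, ← add_assoc]
    refine ih (hf.add_isSignedAE ha hd.1) hs' ?_
    rw [Vars_add hd.1]
    exact Set.disjoint_union_left.2 ⟨hd.2, has⟩

theorem IsDisjointSum.isAE_iff {f : K} {s : Multiset K} (h : IsDisjointSum signedAtoms f s) :
    IsAE f ↔ ∃ g ∈ s, IsAE g := by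
  constructor
  · intro hf
    obtain ⟨t, ht, hAE⟩ := hf.exists_isDisjointSum
    rwa [h.unique ht]
  · rintro ⟨g, hg, hgAE⟩
    obtain ⟨t, rfl⟩ := Multiset.exists_cons_of_mem hg
    obtain ⟨-, hd, ht, rfl⟩ := h.of_cons
    exact hgAE.add_sum (ht.mono fun _ ha ↦ ha.1) hd

theorem IsDisjointSum.isAE_neg_iff {f : K} {s : Multiset K} (h : IsDisjointSum signedAtoms f s) :
    IsAE (-f) ↔ ∃ g ∈ s, IsAE (-g) := by
  simp [h.neg.isAE_iff]

/-! ### Decompositions and isomorphism -/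

theorem EndsWith.isAE {f : K} {o : Op} (h : EndsWith f o) : IsAE f := by
  cases h with
  | var i => exact .var i
  | add_base hij => exact .add (.var _) (.var _) (disjoint_Vars_Xv hij)
  | sub_base hij => exact .sub (.var _) (.var _) (disjoint_Vars_Xv hij)
  | mul_base hij => exact .mul (.var _) (.var _) (disjoint_Vars_Xv hij)
  | div_base hij => exact .div (.var _) (.var _) (disjoint_Vars_Xv hij)
  | add_rec hg hh hd => exact .add hg hh hd
  | mul_rec hg hh hd => exact .mul hg hh hd
  | div_rec hg hh hd => exact .div hg hh hd
  | sub_rec hg hh hd => exact .sub hg hh hd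

theorem EndsWith.exists_eq_add {f : K} (h : EndsWith f .add) :
    ∃ g h o₁ o₂, f = g + h ∧ Disjoint (Vars g) (Vars h) ∧ o₁ ≠ .sub ∧ o₂ ≠ .sub ∧
      EndsWith g o₁ ∧ EndsWith h o₂ := by
  cases h with
  | add_base hij =>
    exact ⟨_, _, .mul, .mul, rfl, disjoint_Vars_Xv hij, by simp, by simp, .var _, .var _⟩
  | add_rec _ _ hd _ h₁ h₂ hg hh => exact ⟨_, _, _, _, rfl, hd, h₁, h₂, hg, hh⟩

theorem EndsWith.exists_isDisjointSum {f : K} {o : Op} (h : EndsWith f o) (ho : o ≠ .sub) :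
    ∃ s, IsDisjointSum (Aset {.mul, .div}) f s := by
  have hsingle {f : K} {o : Op} (h : EndsWith f o) (ho : o = .mul ∨ o = .div) :
      ∃ s, IsDisjointSum (Aset {.mul, .div}) f s :=
    ⟨{f}, .singleton ⟨h.isAE, o, ho, h⟩⟩
  induction h with
  | sub_base | sub_rec => exact absurd rfl ho
  | add_base hij =>
    obtain ⟨s, hs⟩ := hsingle (.var _) (.inl rfl)
    obtain ⟨t, ht⟩ := hsingle (.var _) (.inl rfl)
    exact ⟨s + t, hs.add ht (disjoint_Vars_Xv hij)⟩
  | add_rec _ _ hd _ h₁ h₂ _ _ ihg ihh =>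
    obtain ⟨s, hs⟩ := ihg h₁
    obtain ⟨t, ht⟩ := ihh h₂
    exact ⟨s + t, hs.add ht hd⟩
  | var i => exact hsingle (.var i) (.inl rfl)
  | mul_base hij => exact hsingle (.mul_base hij) (.inl rfl)
  | div_base hij => exact hsingle (.div_base hij) (.inr rfl)
  | mul_rec hg hh hd hn h₁ h₂ hgo hho =>
    exact hsingle (.mul_rec hg hh hd hn h₁ h₂ hgo hho) (.inl rfl)
  | div_rec hg hh hd hn h₁ h₂ hgo hho =>
    exact hsingle (.div_rec hg hh hd hn h₁ h₂ hgo hho) (.inr rfl)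

theorem IsDisjointSum.card_pos {A : Set K} {f : K} {s : Multiset K} (h : IsDisjointSum A f s)
    (hf : f ≠ 0) : 0 < Multiset.card s :=
  Multiset.card_pos.2 fun hs ↦ hf (by rw [← h.sum_eq, hs, Multiset.sum_zero])

theorem mem_Aset_mul_div {f : K} :
    f ∈ Aset {.mul, .div} ↔ IsAE f ∧ (EndsWith f .mul ∨ EndsWith f .div) := by
  simp [Aset, EndsIn]

theorem sumDecomp_iff {f : K} {s : Multiset K} :
    SumDecomp f s ↔ 2 ≤ Multiset.card s ∧ IsDisjointSum (Aset {.mul, .div}) f s := by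
  constructor
  · rintro ⟨hcard, hmem, hpair, hsum, -⟩
    exact ⟨hcard, fun g hg ↦ mem_Aset_mul_div.2 (hmem g hg), hpair, hsum.symm⟩
  · rintro ⟨hcard, h⟩
    exact ⟨hcard, fun g hg ↦ mem_Aset_mul_div.1 (h.mem g hg), h.pairwise, h.sum_eq.symm,
      h.Vars_eq⟩

theorem EndsWith.exists_sumDecomp {f : K} (hf : EndsWith f .add) : ∃ s, SumDecomp f s := by
  obtain ⟨g, h, o₁, o₂, rfl, hd, ho₁, ho₂, hg, hh⟩ := hf.exists_eq_add
  obtain ⟨s, hs⟩ := hg.exists_isDisjointSum ho₁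
  obtain ⟨t, ht⟩ := hh.exists_isDisjointSum ho₂
  refine ⟨s + t, sumDecomp_iff.2 ⟨?_, hs.add ht hd⟩⟩
  rw [Multiset.card_add]
  exact Nat.add_le_add (hs.card_pos hg.isAE.ne_zero) (ht.card_pos hh.isAE.ne_zero)

theorem Aset_mul_div_subset_signedAtoms : Aset {.mul, .div} ⊆ signedAtoms := by
  rintro f ⟨hf, o, ho, h⟩
  exact ⟨.inl hf, h.linked ho⟩

theorem SumDecomp.isDisjointSum {f : K} {s : Multiset K} (h : SumDecomp f s) :
    IsDisjointSum signedAtoms f s :=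
  (sumDecomp_iff.1 h).2.mono Aset_mul_div_subset_signedAtoms

theorem exists_perm_eqOn {α : Type*} {s : Set α} (hs : s.Finite) {φ : α → α} (hφ : s.InjOn φ) :
    ∃ σ : Equiv.Perm α, s.EqOn σ φ := by
  obtain ⟨σ, hσ⟩ : ∃ σ : Equiv.Perm α, ∀ i : s, σ i = φ i := by
    let e : s ↪ α := ⟨s.domRestrict φ, hφ.injective⟩
    cases finite_or_infinite α
    · exact Cardinal.extend_function_finite e ⟨.refl α⟩
    · exact Cardinal.extend_function_of_lt e
        (hs.lt_aleph0.trans_le (Cardinal.aleph0_le_mk α)) ⟨.refl α⟩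
  exact ⟨σ, fun i hi ↦ hσ ⟨i, hi⟩⟩

namespace Iso

variable {f g h f' g' : K}

theorem refl (f : K) : Iso f f := ⟨1, permAct_one f⟩

theorem symm : Iso f g → Iso g f := by
  rintro ⟨σ, rfl⟩
  exact ⟨σ⁻¹, by rw [← permAct_mul, inv_mul_cancel, permAct_one]⟩

theorem trans : Iso f g → Iso g h → Iso f h := by
  rintro ⟨σ, rfl⟩ ⟨τ, rfl⟩
  exact ⟨τ * σ, permAct_mul τ σ f⟩

theorem neg : Iso f g → Iso (-f) (-g) := by
  rintro ⟨σ, rfl⟩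
  exact ⟨σ, map_neg _ _⟩

theorem isAE (h : Iso f g) (hf : IsAE f) : IsAE g := by
  obtain ⟨σ, rfl⟩ := h
  exact hf.permAct σ

theorem add (hf : Iso f f') (hg : Iso g g') (hd : Disjoint (Vars f) (Vars g))
    (hd' : Disjoint (Vars f') (Vars g')) : Iso (f + g) (f' + g') := by
  classical
  obtain ⟨σ, rfl⟩ := hf
  obtain ⟨τ, rfl⟩ := hg
  rw [Vars_permAct, Vars_permAct] at hd'
  let φ : ℕ → ℕ := (Vars f).piecewise σ τ
  have hφf : (Vars f).EqOn φ σ := Set.piecewise_eqOn _ _ _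
  have hφg : (Vars g).EqOn φ τ := (Set.piecewise_eqOn_compl _ _ _).mono hd.subset_compl_left
  have hφ : (Vars f ∪ Vars g).InjOn φ := by
    refine (Set.injOn_union hd).2 ⟨hφf.injOn_iff.2 σ.injective.injOn,
      hφg.injOn_iff.2 τ.injective.injOn, fun i hi j hj hij ↦ ?_⟩
    rw [hφf hi, hφg hj] at hij
    exact Set.disjoint_left.1 hd' ⟨i, hi, rfl⟩ ⟨j, hj, hij.symm⟩
  obtain ⟨ρ, hρ⟩ := exists_perm_eqOn ((Vars_finite f).union (Vars_finite g)) hφ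
  refine ⟨ρ, ?_⟩
  rw [map_add, permAct_congr fun i hi ↦ (hρ (.inl hi)).trans (hφf hi),
    permAct_congr fun i hi ↦ (hρ (.inr hi)).trans (hφg hi)]

theorem sum {s t : Multiset K} (h : Multiset.Rel Iso s t)
    (hs : s.Pairwise fun a b ↦ Disjoint (Vars a) (Vars b))
    (ht : t.Pairwise fun a b ↦ Disjoint (Vars a) (Vars b)) : Iso s.sum t.sum := by
  induction h with
  | zero => exact .refl _
  | cons hab _ ih =>
    rw [multiset_pairwise_cons] at hs ht
    rw [Multiset.sum_cons, Multiset.sum_cons]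
    exact hab.add (ih hs.2 ht.2) (disjoint_Vars_sum hs.1) (disjoint_Vars_sum ht.1)

end Iso

theorem classOf_eq_iff {f g : K} : classOf f = classOf g ↔ Iso f g := by
  constructor
  · intro h
    have hg : g ∈ classOf g := Iso.refl g
    rwa [← h] at hg
  · intro h
    ext x
    exact ⟨h.symm.trans, h.trans⟩

theorem IsDisjointSum.iso_iff {f g : K} {s t : Multiset K} (hs : IsDisjointSum signedAtoms f s)
    (ht : IsDisjointSum signedAtoms g t) : Iso f g ↔ s.map classOf = t.map classOf := by
  constructor
  · rintro ⟨σ, rfl⟩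
    rw [← (hs.permAct σ).unique ht, Multiset.map_map]
    exact Multiset.map_congr rfl fun a _ ↦ classOf_eq_iff.2 ⟨σ, rfl⟩
  · intro h
    rw [← Multiset.rel_eq, Multiset.rel_map] at h
    rw [← hs.sum_eq, ← ht.sum_eq]
    exact .sum (h.mono fun _ _ _ _ ↦ classOf_eq_iff.1) hs.pairwise ht.pairwise

section NegClass

open scoped Pointwise

theorem neg_classOf (f : K) : -classOf f = classOf (-f) := by
  ext x
  exact ⟨fun h ↦ neg_neg x ▸ Iso.neg h, fun h ↦ neg_neg f ▸ Iso.neg h⟩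

theorem exists_pairing_of_map_eq_map_neg {α β : Type*} [InvolutiveNeg β] (q : α → β)
    (s : Multiset α) (h : s.map q = s.map (fun a ↦ -q a)) :
    ∃ (c : Multiset α) (m : Multiset (α × α)), s = c + m.map Prod.fst + m.map Prod.snd ∧
      (∀ a ∈ c, -q a = q a) ∧ ∀ p ∈ m, q p.1 = -q p.2 ∧ -q p.1 ≠ q p.1 := by
  induction s using Multiset.strongInductionOn with
  | ih s ih =>
    obtain rfl | ⟨a, ha⟩ := s.empty_or_exists_mem
    · exact ⟨0, 0, by simp⟩
    obtain ⟨s, rfl⟩ := Multiset.exists_cons_of_mem ha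
    by_cases haq : -q a = q a
    · rw [Multiset.map_cons, Multiset.map_cons, haq, Multiset.cons_inj_right] at h
      obtain ⟨c, m, rfl, hc, hm⟩ := ih s (Multiset.lt_cons_self s a) h
      exact ⟨a ::ₘ c, m, by simp only [Multiset.cons_add],
        Multiset.forall_mem_cons.2 ⟨haq, hc⟩, hm⟩
    · obtain ⟨b, hb, hba⟩ : ∃ b ∈ s, -q b = q a := by
        have hmem : q a ∈ (a ::ₘ s).map (fun a ↦ -q a) :=
          h ▸ Multiset.mem_map_of_mem q (Multiset.mem_cons_self a s)
        simpa [Ne.symm haq] using hmem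
      obtain ⟨s, rfl⟩ := Multiset.exists_cons_of_mem hb
      have hab : -q a = q b := by rw [← hba, neg_neg]
      simp only [Multiset.map_cons, hba, hab] at h
      rw [Multiset.cons_swap, Multiset.cons_inj_right, Multiset.cons_inj_right] at h
      obtain ⟨c, m, rfl, hc, hm⟩ := ih s
        ((Multiset.lt_cons_self s b).trans (Multiset.lt_cons_self _ a)) h
      exact ⟨c, (a, b) ::ₘ m, by simp [Multiset.cons_swap a b], hc,
        Multiset.forall_mem_cons.2 ⟨⟨hba.symm, haq⟩, hm⟩⟩

theorem map_eq_map_neg_iff {α β : Type*} [InvolutiveNeg β] (q : α → β) (s : Multiset α) :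
    s.map q = s.map (fun a ↦ -q a) ↔
      ∃ (c : Multiset α) (m : Multiset (α × α)), s = c + m.map Prod.fst + m.map Prod.snd ∧
        (∀ a ∈ c, -q a = q a) ∧ ∀ p ∈ m, q p.1 = -q p.2 ∧ -q p.1 ≠ q p.1 := by
  refine ⟨exists_pairing_of_map_eq_map_neg q s, ?_⟩
  rintro ⟨c, m, rfl, hc, hm⟩
  have hfst : m.map (fun p ↦ q p.1) = m.map (fun p ↦ -q p.2) :=
    Multiset.map_congr rfl fun p hp ↦ (hm p hp).1
  have hsnd : m.map (fun p ↦ q p.2) = m.map (fun p ↦ -q p.1) :=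
    Multiset.map_congr rfl fun p hp ↦ by rw [(hm p hp).1, neg_neg]
  simp only [Multiset.map_add, Multiset.map_map, Function.comp_def, hfst, hsnd,
    Multiset.map_congr rfl hc, add_right_comm]

theorem IsAE.thirdType_iff {f : K} (hf : IsAE f) : ThirdType f ↔ Iso f (-f) :=
  ⟨fun h ↦ h.2.2, fun h ↦ ⟨hf, h.isAE hf, h⟩⟩

theorem iso_neg_iff_classOf_eq_neg {f g : K} : Iso f (-g) ↔ classOf f = -classOf g := by
  rw [neg_classOf, classOf_eq_iff]

theorem IsAE.thirdType_iff_neg_classOf_eq {f : K} (hf : IsAE f) :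
    ThirdType f ↔ -classOf f = classOf f := by
  rw [hf.thirdType_iff, iso_neg_iff_classOf_eq_neg, eq_comm]

theorem IsAE.secondType_iff {f : K} (hf : IsAE f) :
    SecondType f ↔ IsAE (-f) ∧ -classOf f ≠ classOf f := by
  rw [SecondType, and_iff_right hf, iso_neg_iff_classOf_eq_neg, ne_comm]

theorem IsAE.secondType_and_iff {f g : K} (hf : IsAE f) (hg : IsAE g) :
    SecondType f ∧ SecondType g ∧ Iso f (-g) ↔
      classOf f = -classOf g ∧ -classOf f ≠ classOf f := by
  rw [hf.secondType_iff, hg.secondType_iff]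
  constructor
  · rintro ⟨⟨-, hne⟩, -, h⟩
    exact ⟨iso_neg_iff_classOf_eq_neg.1 h, hne⟩
  · rintro ⟨h, hne⟩
    have hiso : Iso f (-g) := iso_neg_iff_classOf_eq_neg.2 h
    have hiso' : Iso g (-f) := iso_neg_iff_classOf_eq_neg.2 (by rw [h, neg_neg])
    refine ⟨⟨hiso'.isAE hg, hne⟩, ⟨hiso.isAE hf, ?_⟩, hiso⟩
    rwa [h, neg_neg, ne_comm] at hne

theorem IsDisjointSum.iso_neg_iff {f : K} {s : Multiset K} (h : IsDisjointSum signedAtoms f s) :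
    Iso f (-f) ↔ s.map classOf = s.map (fun g ↦ -classOf g) := by
  simp only [h.iso_iff h.neg, Multiset.map_map, Function.comp_def, neg_classOf]

theorem map_classOf_eq_map_neg_iff {s : Multiset K} (hs : ∀ g ∈ s, IsAE g) :
    s.map classOf = s.map (fun g ↦ -classOf g) ↔
      ∃ (c : Multiset K) (m : Multiset (K × K)), s = c + m.map Prod.fst + m.map Prod.snd ∧
        (∀ g ∈ c, ThirdType g) ∧
        ∀ p ∈ m, SecondType p.1 ∧ SecondType p.2 ∧ Iso p.1 (-p.2) := by
  rw [map_eq_map_neg_iff]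
  refine exists₂_congr fun c m ↦ and_congr_right ?_
  rintro rfl
  simp only [Multiset.mem_add, or_imp, forall_and, Multiset.forall_mem_map_iff] at hs
  obtain ⟨⟨hc, hfst⟩, hsnd⟩ := hs
  exact and_congr (forall₂_congr fun g hg ↦ (hc g hg).thirdType_iff_neg_classOf_eq.symm)
    (forall₂_congr fun p hp ↦ ((hfst p hp).secondType_and_iff (hsnd p hp)).symm)

end NegClass

/-- Every `f ∈ 𝒜(+)` can be expressed uniquely, up to the order of the
summands, as `f = f₁ + ⋯ + f_n` with `n ≥ 2`, pairwise disjoint variable sets whose union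
is `𝒱(f)`, and each `fⱼ ∈ 𝒜(×,÷)`. Moreover (i) `f` is of the first type iff every `fⱼ`
is of the first type, and (ii) `f` is of the third type iff every `fⱼ` is of the second or
third type and the second-type summands can be grouped into pairs `{f_{j'}, f_{j''}}`
with `f_{j'} ≅ -f_{j''}`. -/
theorem sum_decomposition (f : K) (hf : IsAE f) (hadd : EndsWith f Op.add) :
    (∃! s : Multiset K, SumDecomp f s) ∧
    ∀ s : Multiset K, SumDecomp f s →
      ((FirstType f ↔ ∀ g ∈ s, FirstType g) ∧
       (ThirdType f ↔
          ∃ (c : Multiset K) (m : Multiset (K × K)),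
            s = c + m.map Prod.fst + m.map Prod.snd ∧
            (∀ g ∈ c, ThirdType g) ∧
            (∀ pr ∈ m, SecondType pr.1 ∧ SecondType pr.2 ∧ Iso pr.1 (-pr.2)))) := by
  obtain ⟨s₀, hs₀⟩ := hadd.exists_sumDecomp
  refine ⟨⟨s₀, hs₀, fun t ht ↦ ht.isDisjointSum.unique hs₀.isDisjointSum⟩, fun s hs ↦ ?_⟩
  have hAE : ∀ g ∈ s, IsAE g := fun g hg ↦ (hs.2.1 g hg).1
  constructor
  · rw [FirstType, and_iff_right hf, hs.isDisjointSum.isAE_neg_iff]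
    push Not
    exact forall₂_congr fun g hg ↦ (and_iff_right (hAE g hg)).symm
  · rw [hf.thirdType_iff, hs.isDisjointSum.iso_neg_iff]
    exact map_classOf_eq_map_neg_iff hAE

end
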